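/- For all real x, y with 0 ≤ x, y < 1 and x + y < 1, one has H(x/(1−y))·(1−y) − H(x) ≤ −x·y·log₂e. -/

import Mathlib

/-!
Put `a = 1 - x`, `b = 1 - y`, `c = 1 - x - y`. After multiplication by `log 2` the terms in
`log x` cancel and the claim becomes `a log a + b log b - c log c ≤ -x y`. Since `a = c + y` and
`b = c + x`, the left side equals `c log (ab / c) + y log a + x log b`. Three uses of
`log t ≤ t - 1` bound it by `(ab - c) - x y - x y`, which is `-x y` because `ab - c = x y`.
-/

/-- The binary entropy function `H(x) = -x·log₂ x - (1-x)·log₂(1-x)`,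
extended by `H(0) = H(1) = 0` (automatic since `logb 2 0 = 0`). -/
noncomputable def binEntropy (x : ℝ) : ℝ :=
  -x * Real.logb 2 x - (1 - x) * Real.logb 2 (1 - x)

theorem stmt3 (x y : ℝ) (hx0 : 0 ≤ x) (hx1 : x < 1) (hy0 : 0 ≤ y) (hy1 : y < 1)
    (hxy : x + y < 1) :
    binEntropy (x / (1 - y)) * (1 - y) - binEntropy x ≤
      -(x * y * Real.logb 2 (Real.exp 1)) := by
  have ha : 0 < 1 - x := by linarith
  have hb : 0 < 1 - y := by linarith
  have hc : 0 < 1 - x - y := by linarith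
  have hl : 0 < Real.log 2 := Real.log_pos (by norm_num)
  have key : (1 - x) * Real.log (1 - x) + (1 - y) * Real.log (1 - y)
      - (1 - x - y) * Real.log (1 - x - y) ≤ -(x * y) := by
    have h1 := Real.log_le_sub_one_of_pos (div_pos (mul_pos ha hb) hc)
    rw [Real.log_div (mul_pos ha hb).ne' hc.ne', Real.log_mul ha.ne' hb.ne'] at h1
    have h1' := mul_le_mul_of_nonneg_left h1 hc.le
    rw [mul_sub (1 - x - y) (_ / _), mul_div_cancel₀ _ hc.ne'] at h1'
    have h2 := mul_le_mul_of_nonneg_left (Real.log_le_sub_one_of_pos ha) hy0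
    have h3 := mul_le_mul_of_nonneg_left (Real.log_le_sub_one_of_pos hb) hx0
    linarith
  -- The factor `x` makes this hold also at `x = 0`, where `log x` is a junk value.
  have hlx : x * Real.log (x / (1 - y)) = x * (Real.log x - Real.log (1 - y)) := by
    rcases hx0.eq_or_lt with h | h
    · simp [← h]
    · rw [Real.log_div h.ne' hb.ne']
  have e : 1 - x / (1 - y) = (1 - x - y) / (1 - y) := by
    field_simp
    ring
  have main : binEntropy (x / (1 - y)) * (1 - y) - binEntropy x
      = ((1 - x) * Real.log (1 - x) + (1 - y) * Real.log (1 - y)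
      - (1 - x - y) * Real.log (1 - x - y)) / Real.log 2 := by
    unfold binEntropy Real.logb
    rw [e, Real.log_div hc.ne' hb.ne']
    have hlx' : x / (1 - y) * Real.log (x / (1 - y)) * (1 - y)
        = x * (Real.log x - Real.log (1 - y)) := by
      rw [← hlx]
      field_simp
    have hcc : (1 - x - y) / (1 - y) * (1 - y) = 1 - x - y := div_mul_cancel₀ _ hb.ne'
    linear_combination (-1 / Real.log 2) * hlx'
      - (Real.log (1 - x - y) - Real.log (1 - y)) / Real.log 2 * hcc
  rw [main, Real.logb, Real.log_exp, mul_one_div, ← neg_div]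
  exact div_le_div_of_nonneg_right key hl.le
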